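/- Let f=(m,n,k) be a triple of integers with discriminant Δ=k²−4mn>0 not a perfect square (so m≠0 and the roots below are irrational). Let ξ⁺(f)=(−k+√Δ)/(2m) and ξ⁻(f)=(−k−√Δ)/(2m) be the two roots of mξ²+kξ+n=0. Then the regular continued fraction expansions of ξ⁺(f) and of ξ⁻(f) are both eventually periodic, and their periods coincide, up to cyclic permutation, with the reverses of each other. -/

import Mathlib

/-- Iterates of the Gauss map starting from `ξ`. -/
noncomputable def gaussIter (ξ : ℝ) : ℕ → ℝ
  | 0 => ξ
  | n + 1 => 1 / (gaussIter ξ n - (⌊gaussIter ξ n⌋ : ℝ))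

/-- The `n`-th partial quotient of the regular continued fraction expansion of `ξ`. -/
noncomputable def cfTerm (ξ : ℝ) (n : ℕ) : ℤ := ⌊gaussIter ξ n⌋

/-- The continued fraction expansion of `ξ` is periodic with period length `P` from index `N`. -/
def IsEventuallyPeriodicCF (ξ : ℝ) (N P : ℕ) : Prop :=
  1 ≤ P ∧ ∀ j : ℕ, cfTerm ξ (N + j + P) = cfTerm ξ (N + j)

/-- `s` is the (minimal) period of the eventually periodic regular continued fraction
expansion of `ξ`; it is well defined up to cyclic permutation. -/
def IsCFPeriod (s : List ℤ) (ξ : ℝ) : Prop :=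
  s ≠ [] ∧
  (∃ N : ℕ, ∀ j : ℕ, cfTerm ξ (N + j) = s.getD (j % s.length) 0) ∧
  (∀ P : ℕ, 1 ≤ P → (∃ N : ℕ, IsEventuallyPeriodicCF ξ N P) → s.length ≤ P)

/-- The value of the binary quadratic form `f = (m, n, k)`, i.e. `m*x^2 + n*y^2 + k*x*y`. -/
def qval (f : ℤ × ℤ × ℤ) (x y : ℤ) : ℤ := f.1 * x ^ 2 + f.2.1 * y ^ 2 + f.2.2 * x * y

/-- The discriminant `k^2 - 4*m*n` of the form `f = (m, n, k)`. -/
def formDisc (f : ℤ × ℤ × ℤ) : ℤ := f.2.2 ^ 2 - 4 * f.1 * f.2.1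

/-- `SL(2,ℤ)`-equivalence of binary quadratic forms. -/
def SLEquiv (f g : ℤ × ℤ × ℤ) : Prop :=
  ∃ a b c d : ℤ, a * d - b * c = 1 ∧
    ∀ x y : ℤ, qval g x y = qval f (a * x + b * y) (c * x + d * y)

/-- The root with the plus sign of `m*ξ^2 + k*ξ + n = 0`, for `f = (m, n, k)`. -/
noncomputable def xiPlus (f : ℤ × ℤ × ℤ) : ℝ :=
  (-(f.2.2 : ℝ) + Real.sqrt ((formDisc f : ℤ) : ℝ)) / (2 * (f.1 : ℝ))

/-- The root with the minus sign of `m*ξ^2 + k*ξ + n = 0`, for `f = (m, n, k)`. -/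
noncomputable def xiMinus (f : ℤ × ℤ × ℤ) : ℝ :=
  (-(f.2.2 : ℝ) - Real.sqrt ((formDisc f : ℤ) : ℝ)) / (2 * (f.1 : ℝ))

/-- The conjugate `(m, n, -k)` of the form `(m, n, k)`. -/
def conjF (f : ℤ × ℤ × ℤ) : ℤ × ℤ × ℤ := (f.1, f.2.1, -f.2.2)

/-- The adjoint `(-n, -m, k)` of the form `(m, n, k)`. -/
def adjF (f : ℤ × ℤ × ℤ) : ℤ × ℤ × ℤ := (-f.2.1, -f.1, f.2.2)

/-- The antipodal `(-n, -m, -k)` of the form `(m, n, k)`. -/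
def antipF (f : ℤ × ℤ × ℤ) : ℤ × ℤ × ℤ := (-f.2.1, -f.1, -f.2.2)

/-- A form `(m, n, k)` is primitive if `gcd(m, n, k) = 1`. -/
def IsPrimitiveForm (f : ℤ × ℤ × ℤ) : Prop := Int.gcd f.1 (Int.gcd f.2.1 f.2.2) = 1

/-!
Run the continued fraction algorithm of one root `x` on the pair `(x, y)` of conjugate roots,
subtracting `⌊x⌋` from both coordinates. Each pair on the orbit consists of the roots of an integral
form of the same discriminant. The first coordinate exceeds `1` after one step, and the second
eventually enters `(-1, 0)`, since otherwise `x` and `y` would have the same expansion. Only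
finitely many pairs of a given discriminant are reduced in this sense, so the orbit is eventually
periodic. On reduced pairs the involution `(x, y) ↦ (-1 / y, -1 / x)` conjugates the map to
its inverse, so the expansion of `-1 / y` reads that of `x` backwards. Finally `y` and `-1 / y` have
the same expansion up to finitely many terms.
-/

section EventuallyPeriodic

variable {α : Type*} {a b : ℕ → α} {s t : List α} {P : ℕ}

/-- The sequence `a` is invariant under translation by `P` from some index on; `P` need not be
minimal, and `P = 0` is allowed. -/
def IsEventualPeriod (P : ℕ) (a : ℕ → α) : Prop :=
  ∃ N, ∀ j, a (N + j + P) = a (N + j)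

/-- The list `s` is a shortest block whose repetition agrees with a tail of the sequence `a`. The
first condition forces `s` to be nonempty, since it says that every `j % s.length` is a valid
index of `s`. -/
def IsPeriodBlock (s : List α) (a : ℕ → α) : Prop :=
  (∃ N, ∀ j, s[j % s.length]? = some (a (N + j))) ∧
    ∀ P, 0 < P → IsEventualPeriod P a → s.length ≤ P

/-- Modulo `P`, the sequence `b` reads the sequence `a` backwards: `a i = b (-1 - i)`. -/
def IsMirror (P : ℕ) (a b : ℕ → α) : Prop :=
  ∀ i j, P ∣ i + j + 1 → a i = b j

lemma exists_ge_dvd_add (hP : 0 < P) (n N : ℕ) : ∃ j ≥ N, P ∣ n + j := by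
  refine ⟨N * P + n * (P - 1), ?_, N + n, ?_⟩
  · exact (Nat.le_mul_of_pos_right N hP).trans (Nat.le_add_right _ _)
  · obtain ⟨Q, rfl⟩ := Nat.exists_eq_succ_of_ne_zero hP.ne'
    simp only [Nat.succ_eq_add_one, Nat.add_sub_cancel]
    ring

lemma mod_eq_of_dvd_add_add_one (hP : 0 < P) {i j : ℕ} (h : P ∣ i + j + 1) :
    i % P = P - 1 - j % P := by
  have hdvd : P ∣ i % P + j % P + 1 :=
    (((Nat.mod_modEq i P).add (Nat.mod_modEq j P)).add_right 1).dvd_iff dvd_rfl |>.mpr h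
  have hi := Nat.mod_lt i hP
  have hj := Nat.mod_lt j hP
  have : i % P + j % P + 1 = P := Nat.eq_of_dvd_of_lt_two_mul (by lia) hdvd (by lia)
  lia

lemma isEventualPeriod_comp_add_iff (i : ℕ) :
    IsEventualPeriod P (fun n ↦ a (i + n)) ↔ IsEventualPeriod P a := by
  constructor
  · rintro ⟨N, h⟩
    exact ⟨i + N, fun j ↦ by simpa only [Nat.add_assoc] using h j⟩
  · rintro ⟨N, h⟩
    refine ⟨N, fun j ↦ ?_⟩
    have := h (i + j)
    rwa [show N + (i + j) = i + (N + j) by ring, Nat.add_assoc] at this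

lemma isPeriodBlock_comp_add_iff (i : ℕ) :
    IsPeriodBlock s (fun n ↦ a (i + n)) ↔ IsPeriodBlock s a := by
  simp only [IsPeriodBlock, isEventualPeriod_comp_add_iff]
  refine and_congr_left fun _ ↦ ⟨?_, ?_⟩
  · rintro ⟨N, h⟩
    exact ⟨i + N, fun j ↦ by rw [h, Nat.add_assoc]⟩
  · rintro ⟨N, h⟩
    -- Deleting whole blocks keeps the repetition of `s` aligned.
    obtain ⟨M, -, c, hc⟩ := exists_ge_dvd_add (P := s.length) (by
      by_contra! hs
      simpa [List.length_eq_zero_iff.mp (Nat.le_zero.mp hs)] using h 0) i 0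
    refine ⟨N + M, fun j ↦ ?_⟩
    rw [show i + (N + M + j) = N + (s.length * c + j) by lia, ← h, Nat.mul_add_mod]

namespace IsPeriodBlock

lemma length_pos (hs : IsPeriodBlock s a) : 0 < s.length := by
  obtain ⟨⟨N, h⟩, -⟩ := hs
  exact List.length_pos_iff.mpr fun h0 ↦ by simpa [h0] using h 0

lemma isEventualPeriod (hs : IsPeriodBlock s a) : IsEventualPeriod s.length a := by
  obtain ⟨⟨N, h⟩, -⟩ := hs
  refine ⟨N, fun j ↦ Option.some_injective _ ?_⟩
  rw [Nat.add_assoc, ← h, ← h, Nat.add_mod_right]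

lemma isRotated (hs : IsPeriodBlock s a) (ht : IsPeriodBlock t a) : s ~r t := by
  have hlen : s.length = t.length :=
    le_antisymm (hs.2 _ ht.length_pos ht.isEventualPeriod)
      (ht.2 _ hs.length_pos hs.isEventualPeriod)
  obtain ⟨⟨N, hN⟩, -⟩ := hs
  obtain ⟨⟨M, hM⟩, -⟩ := ht
  have hrot : s.rotate M = t.rotate N := by
    refine List.ext_getElem? fun k ↦ ?_
    rcases lt_or_ge k s.length with hk | hk
    · rw [List.getElem?_rotate hk, List.getElem?_rotate (hlen ▸ hk), hN, hM]
      congr 2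
      lia
    · rw [List.getElem?_eq_none (by simpa), List.getElem?_eq_none (by simpa [← hlen])]
  exact (List.IsRotated.forall s M).symm.trans (hrot ▸ List.IsRotated.forall t N)

end IsPeriodBlock

namespace IsMirror

lemma isEventualPeriod (hP : 0 < P) (h : IsMirror P a b) {Q : ℕ} (hb : IsEventualPeriod Q b) :
    IsEventualPeriod Q a := by
  obtain ⟨N, hN⟩ := hb
  refine ⟨0, fun i ↦ ?_⟩
  obtain ⟨j, hj, hdvd⟩ := exists_ge_dvd_add hP (0 + i + Q + 1) N
  obtain ⟨l, rfl⟩ := Nat.exists_eq_add_of_le hj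
  calc
    a (0 + i + Q) = b (N + l) := h _ _ (hdvd.trans (dvd_of_eq (by ring)))
    _ = b (N + l + Q) := (hN l).symm
    _ = a (0 + i) := (h _ _ (hdvd.trans (dvd_of_eq (by ring)))).symm

lemma isPeriodBlock_reverse (hP : 0 < P) (h : IsMirror P a b) (hs : IsPeriodBlock s a) :
    IsPeriodBlock s.reverse b := by
  have hL := hs.length_pos
  obtain ⟨⟨N, hN⟩, hmin⟩ := hs
  refine ⟨?_, fun Q hQ hb ↦ by simpa using hmin Q hQ (h.isEventualPeriod hP hb)⟩
  obtain ⟨M, -, hM⟩ := exists_ge_dvd_add hL N 0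
  refine ⟨M, fun j ↦ ?_⟩
  obtain ⟨i, -, hi⟩ := exists_ge_dvd_add (Nat.mul_pos hP hL) (N + (M + j) + 1) 0
  have hb : a (N + i) = b (M + j) :=
    h _ _ ((dvd_mul_right P s.length).trans (hi.trans (dvd_of_eq (by ring))))
  have hij : s.length ∣ i + j + 1 := by
    refine (Nat.dvd_add_right hM).mp ((dvd_mul_left s.length P).trans ?_)
    exact hi.trans (dvd_of_eq (by ring))
  rw [List.length_reverse, List.getElem?_reverse (Nat.mod_lt j hL),
    ← mod_eq_of_dvd_add_add_one hL hij, hN, hb]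

end IsMirror

end EventuallyPeriodic

section GaussMap

variable {x y : ℝ}

lemma gaussIter_succ (x : ℝ) (n : ℕ) : gaussIter x (n + 1) = (Int.fract (gaussIter x n))⁻¹ :=
  one_div _

lemma gaussIter_one (x : ℝ) : gaussIter x 1 = (Int.fract x)⁻¹ :=
  gaussIter_succ x 0

lemma gaussIter_add (x : ℝ) (i j : ℕ) : gaussIter x (i + j) = gaussIter (gaussIter x i) j := by
  induction j with
  | zero => rfl
  | succ j ih => rw [← Nat.add_assoc, gaussIter_succ, ih, gaussIter_succ]

lemma cfTerm_gaussIter (x : ℝ) (i n : ℕ) : cfTerm (gaussIter x i) n = cfTerm x (i + n) := by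
  rw [cfTerm, cfTerm, gaussIter_add]

lemma irrational_inv_fract (hx : Irrational x) : Irrational (Int.fract x)⁻¹ :=
  irrational_inv_iff.mpr (hx.sub_intCast _)

lemma irrational_gaussIter (hx : Irrational x) (n : ℕ) : Irrational (gaussIter x n) := by
  induction n with
  | zero => exact hx
  | succ n ih => exact gaussIter_succ x n ▸ irrational_inv_fract ih

lemma one_lt_inv_fract (hx : Irrational x) : 1 < (Int.fract x)⁻¹ :=
  (one_lt_inv₀ (Int.fract_pos.mpr (hx.ne_int _))).mpr (Int.fract_lt_one x)

lemma intFractPair_stream_eq_gaussIter (hx : Irrational x) (n : ℕ) :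
    GenContFract.IntFractPair.stream x n = some (.of (gaussIter x n)) := by
  induction n with
  | zero => rfl
  | succ n ih =>
    rw [gaussIter_succ]
    exact GenContFract.IntFractPair.stream_succ_of_some ih
      ((irrational_gaussIter hx n).sub_intCast _).ne_zero

lemma eq_of_cfTerm_eq (hx : Irrational x) (hy : Irrational y) (h : cfTerm x = cfTerm y) :
    x = y := by
  have hget {z : ℝ} (hz : Irrational z) (n : ℕ) :
      (GenContFract.of z).s.get? n = some ⟨1, cfTerm z (n + 1)⟩ :=
    GenContFract.get?_of_eq_some_of_succ_get?_intFractPair_stream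
      (intFractPair_stream_eq_gaussIter hz (n + 1))
  have hcf : GenContFract.of x = GenContFract.of y := by
    refine GenContFract.ext ?_ (Stream'.Seq.ext fun n ↦ by rw [hget hx, hget hy, h])
    rw [GenContFract.of_h_eq_floor, GenContFract.of_h_eq_floor]
    exact congrArg Int.cast (congrFun h 0)
  exact tendsto_nhds_unique (GenContFract.of_convergence x) (hcf ▸ GenContFract.of_convergence y)

end GaussMap

section TailEquiv

/-- The orbits of `u` and `v` under the Gauss map meet, so that the continued fraction expansions
of `u` and `v` agree after deleting finitely many terms from each. -/
def TailEquiv (u v : ℝ) : Prop :=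
  ∃ i j, gaussIter u i = gaussIter v j

lemma tailEquiv_gaussIter (u : ℝ) (n : ℕ) : TailEquiv u (gaussIter u n) :=
  ⟨n, 0, rfl⟩

lemma tailEquiv_add_intCast (u : ℝ) (a : ℤ) : TailEquiv (u + a) u :=
  ⟨1, 1, by rw [gaussIter_one, gaussIter_one, Int.fract_add_intCast]⟩

lemma tailEquiv_sub_intCast (u : ℝ) (a : ℤ) : TailEquiv (u - a) u :=
  ⟨1, 1, by rw [gaussIter_one, gaussIter_one, Int.fract_sub_intCast]⟩

namespace TailEquiv

variable {u v w : ℝ}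

lemma refl (u : ℝ) : TailEquiv u u :=
  ⟨0, 0, rfl⟩

lemma symm : TailEquiv u v → TailEquiv v u
  | ⟨i, j, h⟩ => ⟨j, i, h.symm⟩

lemma trans : TailEquiv u v → TailEquiv v w → TailEquiv u w
  | ⟨i, j, h⟩, ⟨k, l, h'⟩ => ⟨i + k, l + j, by
      rw [gaussIter_add, h, ← gaussIter_add, Nat.add_comm, gaussIter_add, h', ← gaussIter_add]⟩

instance : Trans TailEquiv TailEquiv TailEquiv :=
  ⟨trans⟩

lemma isPeriodBlock_iff {s : List ℤ} (h : TailEquiv u v) :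
    IsPeriodBlock s (cfTerm u) ↔ IsPeriodBlock s (cfTerm v) := by
  obtain ⟨i, j, h⟩ := h
  rw [← isPeriodBlock_comp_add_iff i, ← isPeriodBlock_comp_add_iff (a := cfTerm v) j]
  simp only [← cfTerm_gaussIter, h]

end TailEquiv

lemma tailEquiv_inv_of_one_lt {u : ℝ} (h : 1 < u) : TailEquiv u⁻¹ u :=
  ⟨1, 0, by
    rw [gaussIter_one, Int.fract_eq_self.mpr ⟨by positivity, inv_lt_one_of_one_lt₀ h⟩, inv_inv]
    rfl⟩

lemma tailEquiv_inv_of_pos {u : ℝ} (h : 0 < u) : TailEquiv u⁻¹ u := by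
  rcases lt_trichotomy u 1 with h1 | rfl | h1
  · simpa using (tailEquiv_inv_of_one_lt ((one_lt_inv₀ h).mpr h1)).symm
  · simpa using TailEquiv.refl 1
  · exact tailEquiv_inv_of_one_lt h1

lemma tailEquiv_one_sub {u : ℝ} (h0 : 0 < u) (h1 : u < 1) : TailEquiv (1 - u) u := by
  have h1' : 0 < 1 - u := sub_pos.mpr h1
  have hne := h1'.ne'
  calc
    TailEquiv (1 - u) (1 - u)⁻¹ := (tailEquiv_inv_of_pos h1').symm
    TailEquiv _ ((1 - u)⁻¹ - (1 : ℤ)) := (tailEquiv_sub_intCast _ 1).symm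
    _ = (u⁻¹ - (1 : ℤ))⁻¹ := by
      push_cast
      field_simp
      ring
    TailEquiv _ (u⁻¹ - (1 : ℤ)) := tailEquiv_inv_of_pos (by
      simpa using (one_lt_inv₀ h0).mpr h1)
    TailEquiv _ u⁻¹ := tailEquiv_sub_intCast _ 1
    TailEquiv _ u := tailEquiv_inv_of_pos h0

lemma tailEquiv_neg (u : ℝ) : TailEquiv (-u) u := by
  rcases (Int.fract_nonneg u).eq_or_lt with h | h
  · exact ⟨1, 1, by rw [gaussIter_one, gaussIter_one, ← h, Int.fract_neg_eq_zero.mpr h.symm]⟩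
  · calc
      TailEquiv (-u) (-u + (1 + ⌊u⌋ : ℤ)) := (tailEquiv_add_intCast _ _).symm
      _ = 1 - Int.fract u := by
        rw [Int.fract]
        push_cast
        ring
      TailEquiv _ (Int.fract u) := tailEquiv_one_sub h (Int.fract_lt_one u)
      TailEquiv _ u := tailEquiv_sub_intCast u _

lemma tailEquiv_inv (u : ℝ) : TailEquiv u⁻¹ u := by
  rcases lt_trichotomy u 0 with h | rfl | h
  · calc
      TailEquiv u⁻¹ (-u⁻¹) := (tailEquiv_neg _).symm
      _ = (-u)⁻¹ := neg_inv
      TailEquiv _ (-u) := tailEquiv_inv_of_pos (neg_pos.mpr h)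
      TailEquiv _ u := tailEquiv_neg u
  · simpa using TailEquiv.refl 0
  · exact tailEquiv_inv_of_pos h

end TailEquiv

section NaturalExtension

/-- The natural extension of the Gauss map: the Möbius transformation `z ↦ 1 / (z - ⌊x⌋)`
determined by the first coordinate `x` is applied to both coordinates. -/
noncomputable def gaussExt (p : ℝ × ℝ) : ℝ × ℝ :=
  ((Int.fract p.1)⁻¹, (p.2 - ⌊p.1⌋)⁻¹)

/-- Reduced pairs in the sense of Galois: the region in which the orbits of `gaussExt` end up, and
on which `gaussExt` can be inverted. -/
def IsReducedPair (p : ℝ × ℝ) : Prop :=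
  1 < p.1 ∧ -1 < p.2 ∧ p.2 < 0

/-- The involution `(x, y) ↦ (-1 / y, -1 / x)`, the time reversal of `gaussExt` on reduced
pairs. -/
noncomputable def galoisFlip (p : ℝ × ℝ) : ℝ × ℝ :=
  (-p.2⁻¹, -p.1⁻¹)

variable {p : ℝ × ℝ}

lemma gaussExt_iterate_fst (p : ℝ × ℝ) (n : ℕ) : (gaussExt^[n] p).1 = gaussIter p.1 n := by
  induction n with
  | zero => rfl
  | succ n ih => rw [Function.iterate_succ_apply', gaussIter_succ, ← ih, gaussExt]

lemma cfTerm_eq_floor_gaussExt_iterate (p : ℝ × ℝ) (n : ℕ) :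
    cfTerm p.1 n = ⌊(gaussExt^[n] p).1⌋ := by
  rw [gaussExt_iterate_fst, cfTerm]

lemma tailEquiv_gaussExt_iterate_fst (p : ℝ × ℝ) (n : ℕ) : TailEquiv p.1 (gaussExt^[n] p).1 :=
  gaussExt_iterate_fst p n ▸ tailEquiv_gaussIter p.1 n

lemma tailEquiv_gaussExt_iterate_snd (p : ℝ × ℝ) (n : ℕ) : TailEquiv p.2 (gaussExt^[n] p).2 := by
  induction n with
  | zero => exact .refl _
  | succ n ih =>
    rw [Function.iterate_succ_apply']
    exact ih.trans ((tailEquiv_inv _).trans (tailEquiv_sub_intCast _ _)).symm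

lemma isReducedPair_gaussExt (hx : Irrational p.1) (h1 : 1 < p.1) (h2 : p.2 < 0) :
    IsReducedPair (gaussExt p) := by
  have hfloor : (1 : ℝ) ≤ ⌊p.1⌋ := mod_cast Int.le_floor.mpr (by simpa using h1.le)
  refine ⟨one_lt_inv_fract hx, ?_, inv_neg''.mpr (by linarith)⟩
  rw [gaussExt, neg_lt, ← inv_neg]
  exact inv_lt_one_of_one_lt₀ (by linarith)

lemma floor_snd_eq_floor_fst (hx : Irrational p.1) (hy : Irrational p.2)
    (h1 : 0 ≤ (gaussExt p).2) (h2 : 0 ≤ (gaussExt (gaussExt p)).2) : ⌊p.2⌋ = ⌊p.1⌋ := by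
  have hfst : 1 < (gaussExt p).1 := one_lt_inv_fract hx
  have hfloor : (1 : ℝ) ≤ ⌊(gaussExt p).1⌋ := mod_cast Int.le_floor.mpr (by simpa using hfst.le)
  have hsnd : 1 ≤ (p.2 - ⌊p.1⌋)⁻¹ := hfloor.trans (sub_nonneg.mp (inv_nonneg.mp h2))
  have hle : p.2 - ⌊p.1⌋ ≤ 1 := (one_le_inv_iff₀.mp hsnd).2
  have hlt : p.2 - ⌊p.1⌋ < 1 := hle.lt_of_ne (hy.sub_intCast _).ne_one
  rw [Int.floor_eq_iff]
  constructor <;> linarith [inv_nonneg.mp h1]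

lemma exists_gaussExt_iterate_snd_neg (hx : Irrational p.1) (hy : Irrational p.2)
    (hne : p.1 ≠ p.2) : ∃ n, (gaussExt^[n + 1] p).2 < 0 := by
  by_contra! hnonneg
  -- Then the second coordinate follows the Gauss orbit of `p.2`, which forces `p.1` and `p.2` to
  -- have the same partial quotients.
  have hsnd (n : ℕ) : (gaussExt^[n] p).2 = gaussIter p.2 n ∧ cfTerm p.2 n = cfTerm p.1 n := by
    have hfloor (n : ℕ) (h : (gaussExt^[n] p).2 = gaussIter p.2 n) :
        cfTerm p.2 n = cfTerm p.1 n := by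
      rw [cfTerm_eq_floor_gaussExt_iterate, cfTerm, ← h]
      refine floor_snd_eq_floor_fst (gaussExt_iterate_fst p n ▸ irrational_gaussIter hx n)
        (h ▸ irrational_gaussIter hy n) ?_ ?_
      · simpa only [← Function.iterate_succ_apply'] using hnonneg n
      · simpa only [← Function.iterate_succ_apply'] using hnonneg (n + 1)
    induction n with
    | zero => exact ⟨rfl, hfloor 0 rfl⟩
    | succ n ih =>
      have h : (gaussExt^[n + 1] p).2 = gaussIter p.2 (n + 1) := by
        rw [Function.iterate_succ_apply', gaussIter_succ, gaussExt,
          ← cfTerm_eq_floor_gaussExt_iterate, ← ih.2, ih.1, cfTerm, Int.self_sub_floor]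
      exact ⟨h, hfloor (n + 1) h⟩
  exact hne (eq_of_cfTerm_eq hx hy (funext fun n ↦ (hsnd n).2.symm))

lemma exists_forall_isReducedPair_gaussExt_iterate (hx : Irrational p.1) (hy : Irrational p.2)
    (hne : p.1 ≠ p.2) : ∃ N, ∀ n ≥ N, IsReducedPair (gaussExt^[n] p) := by
  have hirr (n : ℕ) : Irrational (gaussExt^[n] p).1 :=
    gaussExt_iterate_fst p n ▸ irrational_gaussIter hx n
  obtain ⟨n, hn⟩ := exists_gaussExt_iterate_snd_neg hx hy hne
  refine ⟨n + 2, fun m hm ↦ ?_⟩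
  induction m, hm using Nat.le_induction with
  | base =>
    rw [Function.iterate_succ_apply'] at hn ⊢
    refine isReducedPair_gaussExt (hirr _) ?_ (by rwa [Function.iterate_succ_apply'])
    rw [Function.iterate_succ_apply']
    exact one_lt_inv_fract (hirr n)
  | succ m _ ih =>
    rw [Function.iterate_succ_apply']
    exact isReducedPair_gaussExt (hirr m) ih.1 ih.2.2

namespace IsReducedPair

lemma floor_galoisFlip_gaussExt (hp : IsReducedPair p) : ⌊(galoisFlip (gaussExt p)).1⌋ = ⌊p.1⌋ := by
  simp only [galoisFlip, gaussExt, inv_inv, Int.floor_eq_iff]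
  constructor <;> linarith [hp.2.1, hp.2.2]

lemma gaussExt_galoisFlip_gaussExt (hp : IsReducedPair p) :
    gaussExt (galoisFlip (gaussExt p)) = galoisFlip p := by
  have h1 : -(p.2 - ⌊p.1⌋) - ⌊p.1⌋ = -p.2 := by ring
  have h2 : -Int.fract p.1 - ⌊p.1⌋ = -p.1 := by rw [Int.fract]; ring
  rw [gaussExt, ← Int.self_sub_floor, hp.floor_galoisFlip_gaussExt]
  simp only [galoisFlip, gaussExt, inv_inv, h1, h2, inv_neg]

end IsReducedPair

lemma gaussExt_iterate_galoisFlip_iterate (h : ∀ n, IsReducedPair (gaussExt^[n] p)) (n : ℕ) :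
    gaussExt^[n] (galoisFlip (gaussExt^[n] p)) = galoisFlip p := by
  induction n with
  | zero => rfl
  | succ n ih =>
    rw [Function.iterate_succ_apply, Function.iterate_succ_apply',
      (h n).gaussExt_galoisFlip_gaussExt, ih]

lemma isMirror_cfTerm_galoisFlip {P : ℕ} (hper : Function.IsPeriodicPt gaussExt P p)
    (h : ∀ n, IsReducedPair (gaussExt^[n] p)) :
    IsMirror P (cfTerm p.1) (cfTerm (galoisFlip p).1) := by
  intro i j hij
  -- Going once around the cycle, `p = gaussExt^[j] (gaussExt^[i + 1] p)`; flipping undoes the last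
  -- `j` steps.
  have hcycle : gaussExt^[j] (gaussExt^[i + 1] p) = p := by
    rw [← Function.iterate_add_apply]
    exact hper.trans_dvd (hij.trans (dvd_of_eq (by ring)))
  have hflip : gaussExt^[j] (galoisFlip p) = galoisFlip (gaussExt^[i + 1] p) := by
    have := gaussExt_iterate_galoisFlip_iterate (p := gaussExt^[i + 1] p)
      (fun n ↦ by simpa only [← Function.iterate_add_apply] using h (n + (i + 1))) j
    rwa [hcycle] at this
  rw [cfTerm_eq_floor_gaussExt_iterate, cfTerm_eq_floor_gaussExt_iterate, hflip,
    Function.iterate_succ_apply', (h i).floor_galoisFlip_gaussExt]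

lemma isEventuallyPeriodicCF_of_isPeriodicPt {N P : ℕ} (hP : 0 < P)
    (hper : Function.IsPeriodicPt gaussExt P (gaussExt^[N] p)) :
    IsEventuallyPeriodicCF p.1 N P := by
  refine ⟨hP, fun j ↦ ?_⟩
  rw [cfTerm_eq_floor_gaussExt_iterate, cfTerm_eq_floor_gaussExt_iterate,
    show N + j + P = j + P + N by ring, Nat.add_comm N j, Function.iterate_add_apply,
    Function.iterate_add_apply _ j P, hper, ← Function.iterate_add_apply]

end NaturalExtension

section ConjugateRoots

/-- The numbers `p.1` and `p.2` are the two roots, with multiplicity, of `f.1 z² + f.2.2 z + f.2.1`;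
this is expressed by Vieta's formulas. -/
def IsRootPair (f : ℤ × ℤ × ℤ) (p : ℝ × ℝ) : Prop :=
  f.1 ≠ 0 ∧ f.1 * (p.1 + p.2) = -f.2.2 ∧ f.1 * (p.1 * p.2) = f.2.1

/-- The pairs of roots of integral binary quadratic forms of discriminant `D`. -/
def rootPairs (D : ℤ) : Set (ℝ × ℝ) :=
  {p | ∃ f, formDisc f = D ∧ IsRootPair f p}

/-- The form whose roots are the images `1 / (z - a)` of the roots `z` of `f`. -/
def invSubForm (f : ℤ × ℤ × ℤ) (a : ℤ) : ℤ × ℤ × ℤ :=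
  (f.1 * a ^ 2 + f.2.2 * a + f.2.1, f.1, 2 * f.1 * a + f.2.2)

variable {f : ℤ × ℤ × ℤ} {p q : ℝ × ℝ} {D : ℤ}

lemma formDisc_invSubForm (f : ℤ × ℤ × ℤ) (a : ℤ) : formDisc (invSubForm f a) = formDisc f := by
  simp only [formDisc, invSubForm]
  ring

lemma irrational_of_isRoot_of_not_isSquare {x : ℝ} (hf : ¬ IsSquare (formDisc f))
    (hx : f.1 * (x * x) + f.2.2 * x + f.2.1 = 0) : Irrational x := by
  rintro ⟨q, rfl⟩
  have hdisc := discrim_eq_sq_of_quadratic_eq_zero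
    (show (f.1 : ℚ) * (q * q) + f.2.2 * q + f.2.1 = 0 by exact_mod_cast hx)
  refine hf (Rat.isSquare_intCast_iff.mp ⟨2 * f.1 * q + f.2.2, ?_⟩)
  rw [← sq, ← hdisc, discrim, formDisc]
  push_cast
  rfl

namespace IsRootPair

lemma swap (h : IsRootPair f p) : IsRootPair f p.swap := by
  obtain ⟨h0, hsum, hprod⟩ := h
  exact ⟨h0, by rw [← hsum, Prod.fst_swap, Prod.snd_swap, add_comm],
    by rw [← hprod, Prod.fst_swap, Prod.snd_swap, mul_comm p.2]⟩

lemma irrational_fst (h : IsRootPair f p) (hf : ¬ IsSquare (formDisc f)) : Irrational p.1 := by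
  obtain ⟨-, hsum, hprod⟩ := h
  exact irrational_of_isRoot_of_not_isSquare hf (by linear_combination p.1 * hsum - hprod)

lemma sq_mul_sub (h : IsRootPair f p) : ((f.1 : ℝ) * (p.1 - p.2)) ^ 2 = formDisc f := by
  obtain ⟨-, hsum, hprod⟩ := h
  simp only [formDisc]
  push_cast
  linear_combination (f.1 * (p.1 + p.2) - f.2.2) * hsum - 4 * f.1 * hprod

lemma inv_sub (h : IsRootPair f p) (a : ℤ) (h1 : p.1 - a ≠ 0) (h2 : p.2 - a ≠ 0) :
    IsRootPair (invSubForm f a) ((p.1 - a)⁻¹, (p.2 - a)⁻¹) := by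
  obtain ⟨h0, hsum, hprod⟩ := h
  have h0' : (f.1 : ℝ) ≠ 0 := Int.cast_ne_zero.mpr h0
  have hlead : ((invSubForm f a).1 : ℝ) = f.1 * ((p.1 - a) * (p.2 - a)) := by
    simp only [invSubForm]
    push_cast
    linear_combination a * hsum - hprod
  refine ⟨?_, ?_, ?_⟩
  · rw [← Int.cast_ne_zero (α := ℝ), hlead]
    exact mul_ne_zero h0' (mul_ne_zero h1 h2)
  · rw [hlead]
    simp only [invSubForm]
    push_cast
    field_simp
    linear_combination hsum
  · rw [hlead]
    simp only [invSubForm]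
    field_simp

lemma eq_of_fst_ne_snd (hp : IsRootPair f p) (hq : IsRootPair f q) (hne : p.1 ≠ q.2) : p = q := by
  obtain ⟨h0, hpsum, hpprod⟩ := hp
  obtain ⟨-, hqsum, hqprod⟩ := hq
  have h0' : (f.1 : ℝ) ≠ 0 := Int.cast_ne_zero.mpr h0
  have hsum := mul_left_cancel₀ h0' (hpsum.trans hqsum.symm)
  have hprod := mul_left_cancel₀ h0' (hpprod.trans hqprod.symm)
  have hroot : (p.1 - q.1) * (p.1 - q.2) = 0 := by linear_combination p.1 * hsum - hprod
  have hfst : p.1 = q.1 :=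
    sub_eq_zero.mp ((mul_eq_zero.mp hroot).resolve_right (sub_ne_zero.mpr hne))
  exact Prod.ext hfst (by linarith)

lemma mem_Icc_of_snd_neg_of_fst_pos (h : IsRootPair f p) (h1 : 0 < p.1) (h2 : p.2 < 0) :
    f ∈ Set.Icc (-formDisc f, -formDisc f, -formDisc f) (formDisc f, formDisc f, formDisc f) := by
  obtain ⟨h0, -, hprod⟩ := h
  have hneg : f.1 * f.2.1 < 0 := by
    have : (f.1 : ℝ) * f.2.1 < 0 := by
      calc
        (f.1 : ℝ) * f.2.1 = f.1 ^ 2 * (p.1 * p.2) := by rw [← hprod]; ring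
        _ < 0 := mul_neg_of_pos_of_neg (by positivity) (mul_neg_of_pos_of_neg h1 h2)
    exact_mod_cast this
  have habs : |f.1| * |f.2.1| = -(f.1 * f.2.1) := by rw [← abs_mul, abs_of_neg hneg]
  have hdisc : formDisc f = |f.2.2| ^ 2 + 4 * (|f.1| * |f.2.1|) := by
    rw [habs, sq_abs, formDisc]
    ring
  have hm : 1 ≤ |f.1| := Int.one_le_abs h0
  have hn : 1 ≤ |f.2.1| := Int.one_le_abs fun hz ↦ by simp [hz] at hneg
  have hm' : |f.1| ≤ formDisc f := by nlinarith [sq_nonneg |f.2.2|]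
  have hn' : |f.2.1| ≤ formDisc f := by nlinarith [sq_nonneg |f.2.2|]
  have hk' : |f.2.2| ≤ formDisc f := by
    have := Int.le_self_sq |f.2.2|
    nlinarith
  exact ⟨⟨(abs_le.mp hm').1, (abs_le.mp hn').1, (abs_le.mp hk').1⟩,
    ⟨(abs_le.mp hm').2, (abs_le.mp hn').2, (abs_le.mp hk').2⟩⟩

end IsRootPair

lemma swap_mem_rootPairs (hp : p ∈ rootPairs D) : p.swap ∈ rootPairs D := by
  obtain ⟨f, hf, h⟩ := hp
  exact ⟨f, hf, h.swap⟩

lemma irrational_fst_of_mem_rootPairs (hD : ¬ IsSquare D) (hp : p ∈ rootPairs D) :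
    Irrational p.1 := by
  obtain ⟨f, rfl, h⟩ := hp
  exact h.irrational_fst hD

lemma irrational_snd_of_mem_rootPairs (hD : ¬ IsSquare D) (hp : p ∈ rootPairs D) :
    Irrational p.2 :=
  irrational_fst_of_mem_rootPairs hD (swap_mem_rootPairs hp)

lemma fst_ne_snd_of_mem_rootPairs (hD : D ≠ 0) (hp : p ∈ rootPairs D) : p.1 ≠ p.2 := by
  obtain ⟨f, rfl, h⟩ := hp
  intro heq
  exact hD (by simpa [heq] using h.sq_mul_sub.symm)

lemma mapsTo_gaussExt_rootPairs (hD : ¬ IsSquare D) :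
    Set.MapsTo gaussExt (rootPairs D) (rootPairs D) := by
  intro p hp
  have h1 := (irrational_fst_of_mem_rootPairs hD hp).sub_intCast ⌊p.1⌋
  have h2 := (irrational_snd_of_mem_rootPairs hD hp).sub_intCast ⌊p.1⌋
  obtain ⟨f, hf, h⟩ := hp
  exact ⟨invSubForm f ⌊p.1⌋, (formDisc_invSubForm f _).trans hf,
    h.inv_sub _ h1.ne_zero h2.ne_zero⟩

lemma finite_rootPairs_inter_isReducedPair (D : ℤ) :
    (rootPairs D ∩ {p | IsReducedPair p}).Finite := by
  have hfin : (⋃ f ∈ Set.Icc (-D, -D, -D) (D, D, D),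
      {p | IsRootPair f p ∧ IsReducedPair p}).Finite := by
    refine (Set.finite_Icc _ _).biUnion fun f _ ↦ Set.Subsingleton.finite ?_
    rintro p ⟨hp, hp1, -⟩ q ⟨hq, -, -, hq2⟩
    exact hp.eq_of_fst_ne_snd hq (by linarith)
  refine hfin.subset ?_
  rintro p ⟨⟨f, rfl, hf⟩, hp⟩
  exact Set.mem_biUnion (hf.mem_Icc_of_snd_neg_of_fst_pos (by linarith [hp.1]) hp.2.2) ⟨hf, hp⟩

lemma exists_isPeriodicPt_gaussExt_of_mem_rootPairs (hD : ¬ IsSquare D) (hp : p ∈ rootPairs D) :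
    ∃ N P, 0 < P ∧ Function.IsPeriodicPt gaussExt P (gaussExt^[N] p) ∧
      ∀ n, IsReducedPair (gaussExt^[n] (gaussExt^[N] p)) := by
  have hD0 : D ≠ 0 := fun h ↦ hD (h ▸ IsSquare.zero)
  obtain ⟨N, hN⟩ := exists_forall_isReducedPair_gaussExt_iterate
    (irrational_fst_of_mem_rootPairs hD hp) (irrational_snd_of_mem_rootPairs hD hp)
    (fst_ne_snd_of_mem_rootPairs hD0 hp)
  have hmem (n : ℕ) : gaussExt^[n + N] p ∈ rootPairs D ∩ {p | IsReducedPair p} :=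
    ⟨(mapsTo_gaussExt_rootPairs hD).iterate _ hp, hN _ (Nat.le_add_left _ _)⟩
  obtain ⟨i, j, hij, heq⟩ :=
    (finite_rootPairs_inter_isReducedPair D).exists_lt_map_eq_of_forall_mem hmem
  refine ⟨i + N, j - i, Nat.sub_pos_of_lt hij, ?_, fun n ↦ ?_⟩
  · rw [Function.IsPeriodicPt, Function.IsFixedPt, ← Function.iterate_add_apply,
      show j - i + (i + N) = j + N by lia]
    exact heq.symm
  · rw [← Function.iterate_add_apply]
    exact hN _ (by lia)

end ConjugateRoots

section PeriodsOfConjugateRoots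

variable {p : ℝ × ℝ} {D : ℤ} {s t : List ℤ}

lemma isPeriodBlock_cfTerm_of_isCFPeriod {x : ℝ} (h : IsCFPeriod s x) :
    IsPeriodBlock s (cfTerm x) := by
  obtain ⟨hs, ⟨N, hN⟩, hmin⟩ := h
  refine ⟨⟨N, fun j ↦ ?_⟩, fun P hP ⟨M, hM⟩ ↦ hmin P hP ⟨M, hP, hM⟩⟩
  have hj := Nat.mod_lt j (List.length_pos_iff.mpr hs)
  rw [hN, List.getD_eq_getElem _ _ hj, List.getElem?_eq_getElem hj]

lemma exists_isEventuallyPeriodicCF_fst (hD : ¬ IsSquare D) (hp : p ∈ rootPairs D) :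
    ∃ N P, IsEventuallyPeriodicCF p.1 N P := by
  obtain ⟨N, P, hP, hper, -⟩ := exists_isPeriodicPt_gaussExt_of_mem_rootPairs hD hp
  exact ⟨N, P, isEventuallyPeriodicCF_of_isPeriodicPt hP hper⟩

lemma isRotated_reverse_of_isCFPeriod (hD : ¬ IsSquare D) (hp : p ∈ rootPairs D)
    (hs : IsCFPeriod s p.1) (ht : IsCFPeriod t p.2) : s ~r t.reverse := by
  obtain ⟨N, P, hP, hper, hred⟩ := exists_isPeriodicPt_gaussExt_of_mem_rootPairs hD hp
  set q := gaussExt^[N] p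
  have hfst : TailEquiv p.1 q.1 := tailEquiv_gaussExt_iterate_fst p N
  have hsnd : TailEquiv p.2 (galoisFlip q).1 :=
    (tailEquiv_gaussExt_iterate_snd p N).trans ((tailEquiv_neg _).trans (tailEquiv_inv _)).symm
  have hs' : IsPeriodBlock s (cfTerm q.1) :=
    hfst.isPeriodBlock_iff.mp (isPeriodBlock_cfTerm_of_isCFPeriod hs)
  have ht' : IsPeriodBlock t (cfTerm (galoisFlip q).1) :=
    hsnd.isPeriodBlock_iff.mp (isPeriodBlock_cfTerm_of_isCFPeriod ht)
  have hrev := (isMirror_cfTerm_galoisFlip hper hred).isPeriodBlock_reverse hP hs'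
  exact List.isRotated_reverse_comm_iff.mp (hrev.isRotated ht')

lemma fst_ne_zero_of_not_isSquare_formDisc {f : ℤ × ℤ × ℤ} (hf : ¬ IsSquare (formDisc f)) :
    f.1 ≠ 0 := by
  intro h
  exact hf ⟨f.2.2, by rw [formDisc, h]; ring⟩

lemma isRootPair_xiPlus_xiMinus {f : ℤ × ℤ × ℤ} (h0 : f.1 ≠ 0) (hf : 0 ≤ formDisc f) :
    IsRootPair f (xiPlus f, xiMinus f) := by
  have h0' : (f.1 : ℝ) ≠ 0 := Int.cast_ne_zero.mpr h0
  have hsq : √(formDisc f : ℝ) ^ 2 = (f.2.2 : ℝ) ^ 2 - 4 * f.1 * f.2.1 := by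
    rw [Real.sq_sqrt (mod_cast hf), formDisc]
    push_cast
    rfl
  refine ⟨h0, ?_, ?_⟩
  · simp only [xiPlus, xiMinus]
    field_simp
    ring
  · simp only [xiPlus, xiMinus]
    field_simp
    linear_combination -hsq

end PeriodsOfConjugateRoots

/-- The continued fractions of the roots `ξ⁺` and `ξ⁻` of `m*ξ^2 + k*ξ + n = 0` are
eventually periodic, and their periods are, up to cyclic permutation, the reverses
of each other. -/
theorem statement0 (m n k : ℤ)
    (hpos : 0 < formDisc (m, n, k)) (hsq : ¬ IsSquare (formDisc (m, n, k))) :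
    (∃ N P : ℕ, IsEventuallyPeriodicCF (xiPlus (m, n, k)) N P) ∧
    (∃ N P : ℕ, IsEventuallyPeriodicCF (xiMinus (m, n, k)) N P) ∧
    (∀ s t : List ℤ, IsCFPeriod s (xiPlus (m, n, k)) → IsCFPeriod t (xiMinus (m, n, k)) →
      List.IsRotated s t.reverse) := by
  have hp : (xiPlus (m, n, k), xiMinus (m, n, k)) ∈ rootPairs (formDisc (m, n, k)) :=
    ⟨_, rfl, isRootPair_xiPlus_xiMinus (fst_ne_zero_of_not_isSquare_formDisc hsq) hpos.le⟩
  exact ⟨exists_isEventuallyPeriodicCF_fst hsq hp,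
    exists_isEventuallyPeriodicCF_fst hsq (swap_mem_rootPairs hp),
    fun _ _ ↦ isRotated_reverse_of_isCFPeriod hsq hp⟩
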